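/- arXiv:math/0112021 — 4 statements merged into one kernel-verified Lean document; each statement's English description precedes it below -/
import Mathlib

section
/- Let R be a behavior with input-value space 𝒰 and output-value space 𝒴, and S a behavior with input-value space 𝒴 and output-value space 𝒵, with 𝒴 and 𝒵 complete. Suppose R has Cauchy gain γ₁ ∈ 𝒦∞ and incremental limit gain κ₁ ∈ 𝒦∞, and S has Cauchy gain γ₂ ∈ 𝒦∞ and incremental limit gain κ₂ ∈ 𝒦∞. Then the cascade S ∘ R has incremental limit gain κ₂ ∘ κ₁; that is, whenever (ω_i, η_i) ∈ R and (η_i, ζ_i) ∈ S with ‖ω_i‖_aa = 0 for i = 1,2, the limits ω_i^∞, ζ_i^∞ exist and d(ζ₁^∞, ζ₂^∞) ≤ κ₂(κ₁(d(ω₁^∞, ω₂^∞))). -/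
open Filter Topology MeasureTheory
open scoped ENNReal NNReal

noncomputable def aa {M : Type*} [PseudoMetricSpace M] (ω : ℝ → M) : ℝ≥0∞ :=
  Filter.limsup (fun p : ℝ × ℝ => edist (ω p.1) (ω p.2)) (Filter.atTop ×ˢ Filter.atTop)

def KInfty (γ : ℝ≥0 → ℝ≥0) : Prop :=
  Continuous γ ∧ StrictMono γ ∧ γ 0 = 0 ∧ Filter.Tendsto γ Filter.atTop Filter.atTop

noncomputable def extK (γ : ℝ≥0 → ℝ≥0) : ℝ≥0∞ → ℝ≥0∞ :=
  fun x => if x = ⊤ then ⊤ else ↑(γ x.toNNReal)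

def CauchyGain {U Y : Type*} [PseudoMetricSpace U] [PseudoMetricSpace Y]
    (R : Set ((ℝ → U) × (ℝ → Y))) (γ : ℝ≥0 → ℝ≥0) : Prop :=
  ∀ p ∈ R, aa p.2 ≤ extK γ (aa p.1)

def IncGain {U Y : Type*} [PseudoMetricSpace U] [PseudoMetricSpace Y]
    (R : Set ((ℝ → U) × (ℝ → Y))) (κ : ℝ≥0 → ℝ≥0) : Prop :=
  ∀ p₁ ∈ R, ∀ p₂ ∈ R, ∀ u₁ u₂ : U,
    Filter.Tendsto p₁.1 Filter.atTop (nhds u₁) → Filter.Tendsto p₂.1 Filter.atTop (nhds u₂) →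
    Filter.limsup (fun t => edist (p₁.2 t) (p₂.2 t)) Filter.atTop ≤ ↑(κ (nndist u₁ u₂))

def convTo {U : Type*} [PseudoMetricSpace U] (ω : ℝ → U) (U₀ : Set U) : Prop :=
  ∀ ε > 0, ∃ T : ℝ, 0 ≤ T ∧ ∀ t ≥ T, ∃ u' ∈ U₀, dist (ω t) u' ≤ ε

def omegaLim {U : Type*} [PseudoMetricSpace U] (ω : ℝ → U) : Set U :=
  {u | ∃ t : ℕ → ℝ, Filter.Tendsto t Filter.atTop Filter.atTop ∧
       Filter.Tendsto (fun i => ω (t i)) Filter.atTop (nhds u)}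

def Precomp {U : Type*} [TopologicalSpace U] (ω : ℝ → U) : Prop :=
  ∃ K : Set U, IsCompact K ∧ ∀ t : ℝ, 0 ≤ t → ω t ∈ K

def cascade {U Y Z : Type*} (R : Set ((ℝ → U) × (ℝ → Y))) (S : Set ((ℝ → Y) × (ℝ → Z))) :
    Set ((ℝ → U) × (ℝ → Z)) :=
  {p | ∃ η : ℝ → Y, (p.1, η) ∈ R ∧ (η, p.2) ∈ S}

def CauchyGainOn {U Y : Type*} [PseudoMetricSpace U] [PseudoMetricSpace Y]
    (R : Set ((ℝ → U) × (ℝ → Y))) (γ : ℝ≥0 → ℝ≥0) (U₀ : Set U) : Prop :=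
  ∀ p ∈ R, convTo p.1 U₀ → aa p.2 ≤ extK γ (aa p.1)

def IncGainOn {U Y : Type*} [PseudoMetricSpace U] [PseudoMetricSpace Y]
    (R : Set ((ℝ → U) × (ℝ → Y))) (κ : ℝ≥0 → ℝ≥0) (U₀ : Set U) : Prop :=
  ∀ p₁ ∈ R, ∀ p₂ ∈ R, ∀ u₁ u₂ : U, u₁ ∈ U₀ → u₂ ∈ U₀ →
    Filter.Tendsto p₁.1 Filter.atTop (nhds u₁) → Filter.Tendsto p₂.1 Filter.atTop (nhds u₂) →
    Filter.limsup (fun t => edist (p₁.2 t) (p₂.2 t)) Filter.atTop ≤ ↑(κ (nndist u₁ u₂))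

def ZV {E : Type*} (X : Set E) (V : E → ℝ) : Set E := {x ∈ X | V x = 0}

def UDecrease {E 𝒰 : Type*} [NormedAddCommGroup E] [NormedSpace ℝ E] [PseudoMetricSpace 𝒰]
    (X₀ X : Set E) (f : E → 𝒰 → E) (Uset : Set 𝒰) (V : E → ℝ) : Prop :=
  (∀ x ∈ X, 0 ≤ V x) ∧ ContinuousOn V X ∧
  (∀ a b : ℝ, 0 ≤ a → a ≤ b → IsCompact {x ∈ X | a ≤ V x ∧ V x ≤ b}) ∧
  (∀ x ∈ X, V x ≠ 0 → ∃ (W : Set E) (Vt : E → ℝ), IsOpen W ∧ x ∈ W ∧ W ⊆ X₀ ∧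
    ContDiffOn ℝ 1 Vt W ∧ (∀ z ∈ W ∩ X, Vt z = V z) ∧
    ∀ u ∈ Uset, fderiv ℝ Vt x (f x u) < 0)

theorem exists_tendsto_of_aa_eq_zero {M : Type*} [PseudoMetricSpace M] [CompleteSpace M]
    {ω : ℝ → M} (h : aa ω = 0) : ∃ u, Tendsto ω atTop (𝓝 u) := by
  refine cauchy_map_iff_exists_tendsto.1 (cauchy_map_iff.2 ⟨inferInstance, ?_⟩)
  refine uniformity_basis_edist.tendsto_right_iff.2 fun ε hε => ?_
  exact eventually_lt_of_limsup_lt (h.trans_lt hε)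

theorem CauchyGain.aa_eq_zero {U Y : Type*} [PseudoMetricSpace U] [PseudoMetricSpace Y]
    {R : Set ((ℝ → U) × (ℝ → Y))} {γ : ℝ≥0 → ℝ≥0} (hR : CauchyGain R γ) (hγ : γ 0 = 0)
    {ω : ℝ → U} {η : ℝ → Y} (h : (ω, η) ∈ R) (hω : aa ω = 0) : aa η = 0 := by
  simpa [extK, hω, hγ] using hR _ h

theorem IncGain.nndist_le {U Y : Type*} [PseudoMetricSpace U] [PseudoMetricSpace Y]
    {R : Set ((ℝ → U) × (ℝ → Y))} {κ : ℝ≥0 → ℝ≥0} (hR : IncGain R κ)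
    {ω₁ ω₂ : ℝ → U} {η₁ η₂ : ℝ → Y} (h₁ : (ω₁, η₁) ∈ R) (h₂ : (ω₂, η₂) ∈ R)
    {u₁ u₂ : U} {y₁ y₂ : Y} (hω₁ : Tendsto ω₁ atTop (𝓝 u₁)) (hω₂ : Tendsto ω₂ atTop (𝓝 u₂))
    (hη₁ : Tendsto η₁ atTop (𝓝 y₁)) (hη₂ : Tendsto η₂ atTop (𝓝 y₂)) :
    nndist y₁ y₂ ≤ κ (nndist u₁ u₂) := by
  have h := hR _ h₁ _ h₂ u₁ u₂ hω₁ hω₂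
  rw [(hη₁.edist hη₂).limsup_eq, edist_nndist] at h
  exact_mod_cast h

/-- the cascade `S ∘ R` has incremental limit gain `κ₂ ∘ κ₁`:
for any two input/output chains with `‖ω_i‖_aa = 0`, the limits `ω_i^∞, ζ_i^∞`
exist and `d(ζ₁^∞,ζ₂^∞) ≤ κ₂(κ₁(d(ω₁^∞,ω₂^∞)))`. -/
theorem stmt7 {𝒰 𝒴 𝒵 : Type*} [MetricSpace 𝒰] [CompleteSpace 𝒰]
    [MetricSpace 𝒴] [CompleteSpace 𝒴] [MetricSpace 𝒵] [CompleteSpace 𝒵]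
    (R : Set ((ℝ → 𝒰) × (ℝ → 𝒴))) (S : Set ((ℝ → 𝒴) × (ℝ → 𝒵)))
    (γ₁ γ₂ κ₁ κ₂ : ℝ≥0 → ℝ≥0)
    (hγ₁ : KInfty γ₁) (hγ₂ : KInfty γ₂) (hκ₁ : KInfty κ₁) (hκ₂ : KInfty κ₂)
    (hR : CauchyGain R γ₁) (hS : CauchyGain S γ₂)
    (hRi : IncGain R κ₁) (hSi : IncGain S κ₂) :
    ∀ ω₁ ω₂ : ℝ → 𝒰, ∀ η₁ η₂ : ℝ → 𝒴, ∀ ζ₁ ζ₂ : ℝ → 𝒵,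
      (ω₁, η₁) ∈ R → (η₁, ζ₁) ∈ S → (ω₂, η₂) ∈ R → (η₂, ζ₂) ∈ S →
      aa ω₁ = 0 → aa ω₂ = 0 →
      ∃ (u₁ u₂ : 𝒰) (z₁ z₂ : 𝒵),
        Filter.Tendsto ω₁ Filter.atTop (nhds u₁) ∧ Filter.Tendsto ω₂ Filter.atTop (nhds u₂) ∧
        Filter.Tendsto ζ₁ Filter.atTop (nhds z₁) ∧ Filter.Tendsto ζ₂ Filter.atTop (nhds z₂) ∧
        nndist z₁ z₂ ≤ κ₂ (κ₁ (nndist u₁ u₂)) := by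
  intro ω₁ ω₂ η₁ η₂ ζ₁ ζ₂ hR₁ hS₁ hR₂ hS₂ hω₁ hω₂
  have hη₁ := hR.aa_eq_zero hγ₁.2.2.1 hR₁ hω₁
  have hη₂ := hR.aa_eq_zero hγ₁.2.2.1 hR₂ hω₂
  obtain ⟨u₁, hu₁⟩ := exists_tendsto_of_aa_eq_zero hω₁
  obtain ⟨u₂, hu₂⟩ := exists_tendsto_of_aa_eq_zero hω₂
  obtain ⟨y₁, hy₁⟩ := exists_tendsto_of_aa_eq_zero hη₁
  obtain ⟨y₂, hy₂⟩ := exists_tendsto_of_aa_eq_zero hη₂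
  obtain ⟨z₁, hz₁⟩ := exists_tendsto_of_aa_eq_zero (hS.aa_eq_zero hγ₂.2.2.1 hS₁ hη₁)
  obtain ⟨z₂, hz₂⟩ := exists_tendsto_of_aa_eq_zero (hS.aa_eq_zero hγ₂.2.2.1 hS₂ hη₂)
  exact ⟨u₁, u₂, z₁, z₂, hu₁, hu₂, hz₁, hz₂,
    (hSi.nndist_le hS₁ hS₂ hy₁ hy₂ hz₁ hz₂).trans
      (hκ₂.2.1.monotone (hRi.nndist_le hR₁ hR₂ hu₁ hu₂ hy₁ hy₂))⟩
end

section
/- Let R be a behavior with input-value space 𝒰 and output-value space 𝒴, where 𝒴 is a complete metric space. If R has a Cauchy gain γ ∈ 𝒦∞, then R has the converging-input converging-output property: for every (ω,η) ∈ R, if ω(t) → ū as t → ∞ for some ū ∈ 𝒰, then η(t) → ȳ as t → ∞ for some ȳ ∈ 𝒴. -/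
open Filter Topology MeasureTheory
open scoped ENNReal NNReal

theorem aa_eq_zero_of_tendsto {M : Type*} [PseudoMetricSpace M] {ω : ℝ → M} {a : M}
    (h : Tendsto ω atTop (𝓝 a)) : aa ω = 0 := by
  have h' : Tendsto (fun p : ℝ × ℝ => edist (ω p.1) (ω p.2)) (atTop ×ˢ atTop)
      (𝓝 (edist a a)) :=
    (h.comp tendsto_fst).edist (h.comp tendsto_snd)
  rw [edist_self] at h'
  exact h'.limsup_eq

theorem cauchy_map_of_aa_eq_zero {M : Type*} [PseudoMetricSpace M] {η : ℝ → M}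
    (h : aa η = 0) : Cauchy (map η atTop) := by
  rw [cauchy_map_iff]
  refine ⟨inferInstance, uniformity_basis_edist.tendsto_right_iff.2 fun ε hε => ?_⟩
  exact eventually_lt_of_limsup_lt (lt_of_eq_of_lt h hε)

theorem extK_zero {γ : ℝ≥0 → ℝ≥0} (h : γ 0 = 0) : extK γ 0 = 0 := by
  simp [extK, h]

/-- a behavior admitting a Cauchy gain has the converging-input
converging-output property. -/
theorem stmt8 {𝒰 𝒴 : Type*} [MetricSpace 𝒰] [MetricSpace 𝒴] [CompleteSpace 𝒴]
    (R : Set ((ℝ → 𝒰) × (ℝ → 𝒴))) (γ : ℝ≥0 → ℝ≥0) (hγ : KInfty γ)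
    (hR : CauchyGain R γ) :
    ∀ ω : ℝ → 𝒰, ∀ η : ℝ → 𝒴, (ω, η) ∈ R →
      ∀ ubar : 𝒰, Filter.Tendsto ω Filter.atTop (nhds ubar) →
      ∃ ybar : 𝒴, Filter.Tendsto η Filter.atTop (nhds ybar) := by
  intro ω η hmem ubar hω
  have h := hR (ω, η) hmem
  rw [aa_eq_zero_of_tendsto hω, extK_zero hγ.2.2.1, nonpos_iff_eq_zero] at h
  exact cauchy_map_iff_exists_tendsto.1 (cauchy_map_of_aa_eq_zero h)
end

section
/- Let R be a behavior with input-value space 𝒰 and output-value space 𝒴, U₀ ⊆ 𝒰 compact, γ ∈ 𝒦∞, and Γ a mapping from compact subsets of U₀ to subsets of 𝒴 such that: (a) for each (ω,η) ∈ R with Ω⁺[ω] ⊆ U₀, the output η is precompact; (b) for each compact U ⊆ U₀ and each (ω,η) ∈ R with Ω⁺[ω] ⊆ U, one has Ω⁺[η] ⊆ Γ(U); (c) for each compact U ⊆ U₀, |Γ(U)| ≤ γ(|U|). Then R has Cauchy gain γ on U₀ and incremental limit gain γ on U₀. Moreover, for each compact U ⊆ U₀ and each (ω,η) ∈ R with ω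 → U, one has η → Γ(Ω⁺[ω]); and if Γ is monotonic (U₁ ⊆ U₂ implies Γ(U₁) ⊆ Γ(U₂)), then also η → Γ(U). -/
open Filter Topology MeasureTheory
open scoped ENNReal NNReal

lemma mem_omegaLim_iff_mapClusterPt {M : Type*} [PseudoMetricSpace M] {ω : ℝ → M} {u : M} :
    u ∈ omegaLim ω ↔ MapClusterPt u atTop ω := by
  constructor
  · rintro ⟨t, ht, hu⟩
    exact hu.mapClusterPt.of_comp ht
  · intro h
    have hne : NeBot (comap ω (𝓝 u) ⊓ atTop) := by
      rw [inf_comm, ← Filter.map_neBot_iff ω, Filter.push_pull, inf_comm]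
      exact h
    obtain ⟨t, ht⟩ := exists_seq_tendsto (comap ω (𝓝 u) ⊓ atTop)
    rw [tendsto_inf, tendsto_comap_iff] at ht
    exact ⟨t, ht.2, ht.1⟩

lemma isClosed_omegaLim {M : Type*} [PseudoMetricSpace M] (ω : ℝ → M) :
    IsClosed (omegaLim ω) := by
  have h : omegaLim ω = {u | ClusterPt u (map ω atTop)} :=
    Set.ext fun _ => mem_omegaLim_iff_mapClusterPt
  rw [h]
  exact isClosed_setOfPred_clusterPt

lemma convTo.omegaLim_subset {M : Type*} [PseudoMetricSpace M] {ω : ℝ → M} {U : Set M}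
    (h : convTo ω U) (hU : IsClosed U) : omegaLim ω ⊆ U := by
  rintro u ⟨t, ht, hu⟩
  rw [← hU.closure_eq, Metric.mem_closure_iff]
  intro ε hε
  obtain ⟨T, -, hT⟩ := h (ε / 2) (by positivity)
  obtain ⟨i, hi, hi'⟩ := ((ht.eventually_ge_atTop T).and
    (Metric.tendsto_nhds.1 hu (ε / 2) (by positivity))).exists
  obtain ⟨v, hv, hd⟩ := hT _ hi
  refine ⟨v, hv, ?_⟩
  have := dist_triangle_left u v (ω (t i))
  linarith

lemma convTo.mono {M : Type*} [PseudoMetricSpace M] {ω : ℝ → M} {U V : Set M}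
    (h : convTo ω U) (hUV : U ⊆ V) : convTo ω V := by
  intro ε hε
  obtain ⟨T, hT, H⟩ := h ε hε
  exact ⟨T, hT, fun t ht => (H t ht).imp fun _ hu => ⟨hUV hu.1, hu.2⟩⟩

lemma Precomp.exists_eventually_mem {M : Type*} [TopologicalSpace M] {ω : ℝ → M}
    (h : Precomp ω) : ∃ K : Set M, IsCompact K ∧ ∀ᶠ t in atTop, ω t ∈ K := by
  obtain ⟨K, hK, H⟩ := h
  exact ⟨K, hK, (eventually_ge_atTop 0).mono H⟩

lemma Precomp.convTo_omegaLim {M : Type*} [PseudoMetricSpace M] {ω : ℝ → M}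
    (h : Precomp ω) : convTo ω (omegaLim ω) := by
  intro ε hε
  obtain ⟨K, hK, hmem⟩ := h.exists_eventually_mem
  have hev : ∀ᶠ t in atTop, ω t ∈ Metric.thickening ε (omegaLim ω) := by
    by_contra hcon
    have hfreq : ∃ᶠ t in atTop, ω t ∈ K \ Metric.thickening ε (omegaLim ω) :=
      ((not_eventually.1 hcon).and_eventually hmem).mono fun _ ht => ⟨ht.2, ht.1⟩
    obtain ⟨x, hx, hcl⟩ :=
      (hK.diff Metric.isOpen_thickening).exists_mapClusterPt_of_frequently hfreq
    exact hx.2 (Metric.self_subset_thickening hε _ (mem_omegaLim_iff_mapClusterPt.2 hcl))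
  obtain ⟨T, hT⟩ := eventually_atTop.1 hev
  refine ⟨max T 0, le_max_right _ _, fun t ht => ?_⟩
  obtain ⟨u, hu, hd⟩ := Metric.mem_thickening_iff.1 (hT t ((le_max_left _ _).trans ht))
  exact ⟨u, hu, hd.le⟩

lemma limsup_edist_le_of_mapClusterPt {ι M : Type*} [PseudoMetricSpace M] {l : Filter ι}
    {f g : ι → M} {K L : Set M} {C : ℝ≥0∞} (hK : IsCompact K) (hL : IsCompact L)
    (hf : ∀ᶠ i in l, f i ∈ K) (hg : ∀ᶠ i in l, g i ∈ L)
    (h : ∀ x y, MapClusterPt x l f → MapClusterPt y l g → edist x y ≤ C) :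
    limsup (fun i => edist (f i) (g i)) l ≤ C := by
  refine le_of_forall_gt fun c hc => ?_
  obtain ⟨d, hCd, hdc⟩ := exists_between hc
  refine lt_of_le_of_lt (limsup_le_of_le (by isBoundedDefault) ?_) hdc
  by_contra hcon
  have hclosed : IsClosed {p : M × M | d ≤ edist p.1 p.2} :=
    isClosed_le continuous_const continuous_edist
  have hfreq : ∃ᶠ i in l, (f i, g i) ∈ (K ×ˢ L) ∩ {p : M × M | d ≤ edist p.1 p.2} :=
    ((not_eventually.1 hcon).and_eventually (hf.and hg)).mono
      fun _ hi => ⟨⟨hi.2.1, hi.2.2⟩, (not_le.1 hi.1).le⟩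
  obtain ⟨⟨x, y⟩, hxy, hcl⟩ :=
    ((hK.prod hL).inter_right hclosed).exists_mapClusterPt_of_frequently hfreq
  have hx : MapClusterPt x l f := hcl.continuousAt_comp continuousAt_fst
  have hy : MapClusterPt y l g := hcl.continuousAt_comp continuousAt_snd
  exact absurd (hxy.2.trans (h x y hx hy)) (not_le.2 hCd)

lemma Precomp.aa_le_ediam {M : Type*} [PseudoMetricSpace M] {ω : ℝ → M} (h : Precomp ω) :
    aa ω ≤ Metric.ediam (omegaLim ω) := by
  obtain ⟨K, hK, hmem⟩ := h.exists_eventually_mem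
  exact limsup_edist_le_of_mapClusterPt (f := fun p : ℝ × ℝ => ω p.1)
    (g := fun p : ℝ × ℝ => ω p.2) hK hK (tendsto_fst.eventually hmem)
    (tendsto_snd.eventually hmem) fun x y hx hy => Metric.edist_le_ediam_of_mem
      (mem_omegaLim_iff_mapClusterPt.2 (MapClusterPt.of_comp tendsto_fst hx))
      (mem_omegaLim_iff_mapClusterPt.2 (MapClusterPt.of_comp tendsto_snd hy))

lemma ediam_omegaLim_le_aa {M : Type*} [PseudoMetricSpace M] (ω : ℝ → M) :
    Metric.ediam (omegaLim ω) ≤ aa ω := by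
  refine Metric.ediam_le ?_
  rintro u ⟨t, ht, hu⟩ v ⟨s, hs, hv⟩
  refine le_of_forall_lt fun c hc => ?_
  obtain ⟨d, hcd, hd⟩ := exists_between hc
  refine hcd.trans_le (le_limsup_of_frequently_le ?_ (by isBoundedDefault))
  exact (ht.prodMk hs).frequently
    (((hu.edist hv).eventually (lt_mem_nhds hd)).mono fun _ => le_of_lt).frequently

lemma extK_mono {γ : ℝ≥0 → ℝ≥0} (hγ : Monotone γ) : Monotone (extK γ) := by
  intro a b hab
  unfold extK
  split_ifs with ha hb hb
  · exact le_rfl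
  · exact absurd (top_le_iff.1 (ha ▸ hab)) hb
  · exact le_top
  · exact ENNReal.coe_le_coe.2 (hγ (ENNReal.toNNReal_mono hb hab))

lemma omegaLim_subset_of_tendsto {M : Type*} [MetricSpace M] {ω : ℝ → M} {u : M}
    (h : Tendsto ω atTop (𝓝 u)) : omegaLim ω ⊆ {u} := by
  rintro v ⟨t, ht, hv⟩
  exact tendsto_nhds_unique hv (h.comp ht)

/-- Lemma 2.1: the sufficient condition via `Γ` yields Cauchy and
incremental limit gains on `U₀`, together with the attractivity conclusions. -/
theorem stmt12 {𝒰 𝒴 : Type*} [MetricSpace 𝒰] [MetricSpace 𝒴]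
    (R : Set ((ℝ → 𝒰) × (ℝ → 𝒴))) (U₀ : Set 𝒰) (hU₀ : IsCompact U₀)
    (γ : ℝ≥0 → ℝ≥0) (hγ : KInfty γ) (Γ : Set 𝒰 → Set 𝒴)
    (ha : ∀ p ∈ R, omegaLim p.1 ⊆ U₀ → Precomp p.2)
    (hb : ∀ U : Set 𝒰, IsCompact U → U ⊆ U₀ →
      ∀ p ∈ R, omegaLim p.1 ⊆ U → omegaLim p.2 ⊆ Γ U)
    (hc : ∀ U : Set 𝒰, IsCompact U → U ⊆ U₀ →
      EMetric.diam (Γ U) ≤ extK γ (EMetric.diam U)) :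
    CauchyGainOn R γ U₀ ∧ IncGainOn R γ U₀ ∧
    (∀ U : Set 𝒰, IsCompact U → U ⊆ U₀ → ∀ p ∈ R, convTo p.1 U →
      convTo p.2 (Γ (omegaLim p.1)) ∧
      ((∀ U₁ U₂ : Set 𝒰, U₁ ⊆ U₂ → Γ U₁ ⊆ Γ U₂) → convTo p.2 (Γ U))) := by
  have key : ∀ U : Set 𝒰, IsCompact U → U ⊆ U₀ → ∀ p ∈ R, convTo p.1 U →
      omegaLim p.1 ⊆ U ∧ Precomp p.2 ∧ omegaLim p.2 ⊆ Γ (omegaLim p.1) := by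
    intro U hU hUU₀ p hp hconv
    have hsub := hconv.omegaLim_subset hU.isClosed
    exact ⟨hsub, ha p hp (hsub.trans hUU₀),
      hb _ (hU.of_isClosed_subset (isClosed_omegaLim _) hsub) (hsub.trans hUU₀) p hp
        subset_rfl⟩
  refine ⟨?_, ?_, ?_⟩
  · intro p hp hconv
    obtain ⟨hsub, hpre, hΓ⟩ := key U₀ hU₀ subset_rfl p hp hconv
    calc aa p.2 ≤ Metric.ediam (omegaLim p.2) := hpre.aa_le_ediam
      _ ≤ Metric.ediam (Γ (omegaLim p.1)) := Metric.ediam_mono hΓ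
      _ ≤ extK γ (Metric.ediam (omegaLim p.1)) :=
        hc _ (hU₀.of_isClosed_subset (isClosed_omegaLim _) hsub) hsub
      _ ≤ extK γ (aa p.1) := extK_mono hγ.2.1.monotone (ediam_omegaLim_le_aa _)
  · intro p₁ hp₁ p₂ hp₂ u₁ u₂ hu₁ hu₂ h₁ h₂
    have hpair : ({u₁, u₂} : Set 𝒰) ⊆ U₀ := Set.pair_subset hu₁ hu₂
    have hcomp : IsCompact ({u₁, u₂} : Set 𝒰) := (Set.toFinite _).isCompact
    have hs₁ : omegaLim p₁.1 ⊆ {u₁, u₂} := (omegaLim_subset_of_tendsto h₁).trans (by simp)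
    have hs₂ : omegaLim p₂.1 ⊆ {u₁, u₂} := (omegaLim_subset_of_tendsto h₂).trans (by simp)
    obtain ⟨K, hK, hmemK⟩ := (ha p₁ hp₁ (hs₁.trans hpair)).exists_eventually_mem
    obtain ⟨L, hL, hmemL⟩ := (ha p₂ hp₂ (hs₂.trans hpair)).exists_eventually_mem
    have hdiam : Metric.ediam (Γ {u₁, u₂}) ≤ γ (nndist u₁ u₂) := by
      have h : Metric.ediam (Γ {u₁, u₂}) ≤ extK γ (Metric.ediam {u₁, u₂}) := hc _ hcomp hpair
      rwa [Metric.ediam_pair, edist_nndist, extK, if_neg ENNReal.coe_ne_top,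
        ENNReal.toNNReal_coe] at h
    exact limsup_edist_le_of_mapClusterPt hK hL hmemK hmemL fun x y hx hy =>
      (Metric.edist_le_ediam_of_mem
        (hb _ hcomp hpair p₁ hp₁ hs₁ (mem_omegaLim_iff_mapClusterPt.2 hx))
        (hb _ hcomp hpair p₂ hp₂ hs₂ (mem_omegaLim_iff_mapClusterPt.2 hy))).trans hdiam
  · intro U hU hUU₀ p hp hconv
    obtain ⟨hsub, hpre, hΓ⟩ := key U hU hUU₀ p hp hconv
    have hη := hpre.convTo_omegaLim.mono hΓ
    exact ⟨hη, fun hmono => hη.mono (hmono _ _ hsub)⟩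
end

section
/- Let 𝒳₀ ⊆ ℝⁿ be open, 𝒳 ⊆ 𝒳₀, 𝒰 and 𝒴 complete metric spaces, f : 𝒳₀ × 𝒰 → ℝⁿ continuous, and h : 𝒳 → 𝒴 continuous. Let γ ∈ 𝒦∞ and suppose that for each compact U ⊆ 𝒰 there exists a U-decrease function V_U with |h(Z_{V_U})| ≤ γ(|U|). For i = 1,2, let ω_i : [0,∞) → 𝒰 be Lebesgue-measurable and precompact with ω_i(t) → ω_i^∞ as t → ∞, and let ξ_i : [0,∞) → 𝒳 be locally Lipschitz with ξ_i'(t) = f(ξ_i(t), ω_i(t)) for almost every t ≥ 0; set η_i := h∘ξ_i. Then the limits η_i^∞ := lim_{t→∞} η_i(t) exist and d(η₁^∞, η₂^∞) ≤ γ(d(ω₁^∞, ω₂^∞)); that is, the behavior of the system ẋ = f(x,u), y = h(x) has incremental limit gain γ. -/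
open Filter Topology MeasureTheory
open scoped ENNReal NNReal

/-- `V` agrees on `X`, near `x`, with a `C¹` function whose derivative along `f · u` stays below
`-δ` for every `u ∈ N`. -/
def DecreasesNear {E 𝒰 : Type*} [NormedAddCommGroup E] [NormedSpace ℝ E]
    (X : Set E) (f : E → 𝒰 → E) (N : Set 𝒰) (V : E → ℝ) (δ : ℝ) (x : E) : Prop :=
  ∃ (W : Set E) (Vt : E → ℝ), IsOpen W ∧ x ∈ W ∧ ContDiffOn ℝ 1 Vt W ∧
    (∀ z ∈ W ∩ X, Vt z = V z) ∧ ∀ z ∈ W, ∀ u ∈ N, fderiv ℝ Vt z (f z u) < -δ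

section Decrease

variable {E 𝒰 : Type*} [NormedAddCommGroup E] [NormedSpace ℝ E]

lemma DecreasesNear.anti {X : Set E} {f : E → 𝒰 → E} {N N' : Set 𝒰} {V : E → ℝ} {δ δ' : ℝ}
    {x : E} (hx : DecreasesNear X f N V δ x) (hN : N' ⊆ N) (hδ : δ' ≤ δ) :
    DecreasesNear X f N' V δ' x := by
  obtain ⟨W, Vt, hWo, hxW, hVt, heq, hlt⟩ := hx
  exact ⟨W, Vt, hWo, hxW, hVt, heq, fun z hz u hu => (hlt z hz u (hN hu)).trans_le (by linarith)⟩

lemma DecreasesNear.eventually {X : Set E} {f : E → 𝒰 → E} {N : Set 𝒰} {V : E → ℝ} {δ : ℝ}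
    {x : E} (hx : DecreasesNear X f N V δ x) : ∀ᶠ y in 𝓝 x, DecreasesNear X f N V δ y := by
  obtain ⟨W, Vt, hWo, hxW, hVt, heq, hlt⟩ := hx
  filter_upwards [hWo.mem_nhds hxW] with y hy
  exact ⟨W, Vt, hWo, hy, hVt, heq, hlt⟩

lemma UDecrease.exists_decreasesNear [PseudoMetricSpace 𝒰] {X₀ X : Set E} {f : E → 𝒰 → E}
    (hf : ContinuousOn (fun p : E × 𝒰 => f p.1 p.2) (X₀ ×ˢ (Set.univ : Set 𝒰)))
    {U : Set 𝒰} (hU : IsCompact U) {V : E → ℝ} (hV : UDecrease X₀ X f U V)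
    {x : E} (hx : x ∈ X) (hVx : V x ≠ 0) :
    ∃ δ > 0, ∃ N, IsOpen N ∧ U ⊆ N ∧ DecreasesNear X f N V δ x := by
  obtain ⟨W, Vt, hWo, hxW, hWX₀, hVt, heq, hlt⟩ := hV.2.2.2 x hx hVx
  have hG : ContinuousOn (fun p : E × 𝒰 => fderiv ℝ Vt p.1 (f p.1 p.2))
      (W ×ˢ (Set.univ : Set 𝒰)) := by
    refine ContinuousOn.clm_apply ?_ (hf.mono (Set.prod_mono_left hWX₀))
    exact (hVt.continuousOn_fderiv_of_isOpen hWo le_rfl).comp continuousOn_fst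
      fun p hp => hp.1
  obtain ⟨δ, hδ, hδU⟩ : ∃ δ > 0, ∀ u ∈ U, fderiv ℝ Vt x (f x u) < -δ := by
    rcases U.eq_empty_or_nonempty with rfl | hne
    · exact ⟨1, one_pos, by simp⟩
    · have hGx : ContinuousOn (fun u => fderiv ℝ Vt x (f x u)) U :=
        hG.comp (f := fun u => (x, u)) (by fun_prop) fun u _ => ⟨hxW, trivial⟩
      obtain ⟨u₀, hu₀, hmax⟩ := hU.exists_isMaxOn hne hGx
      have h0 := hlt u₀ hu₀
      refine ⟨-(fderiv ℝ Vt x (f x u₀)) / 2, by linarith, fun u hu => ?_⟩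
      have : fderiv ℝ Vt x (f x u) ≤ fderiv ℝ Vt x (f x u₀) := hmax hu
      linarith
  have hopen := hG.isOpen_inter_preimage (hWo.prod isOpen_univ) (isOpen_Iio (a := -δ))
  obtain ⟨W', N, hW'o, hNo, hxW', hUN, hsub⟩ :=
    generalized_tube_lemma (isCompact_singleton (x := x)) hU hopen (by
      rintro ⟨z, u⟩ ⟨rfl, hu⟩
      exact ⟨⟨hxW, trivial⟩, hδU u hu⟩)
  refine ⟨δ, hδ, N, hNo, hUN, W ∩ W', Vt, hWo.inter hW'o, ⟨hxW, hxW' rfl⟩,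
    hVt.mono Set.inter_subset_left, fun z hz => heq z ⟨hz.1.1, hz.2⟩, fun z hz u hu => ?_⟩
  exact (hsub (Set.mk_mem_prod hz.2 hu)).2

/-- On a compact set where `V` does not vanish, a `U`-decrease function decreases at a uniform
rate, for all inputs in a neighborhood of `U`. -/
lemma UDecrease.exists_uniform_decreasesNear [PseudoMetricSpace 𝒰] {X₀ X : Set E}
    {f : E → 𝒰 → E}
    (hf : ContinuousOn (fun p : E × 𝒰 => f p.1 p.2) (X₀ ×ˢ (Set.univ : Set 𝒰)))
    {U : Set 𝒰} (hU : IsCompact U) {V : E → ℝ} (hV : UDecrease X₀ X f U V)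
    {S : Set E} (hS : IsCompact S) (hSX : S ⊆ X) (hVS : ∀ x ∈ S, V x ≠ 0) :
    ∃ δ > 0, ∃ N, IsOpen N ∧ U ⊆ N ∧ ∀ x ∈ S, DecreasesNear X f N V δ x := by
  refine hS.induction_on (p := fun S => ∃ δ > 0, ∃ N, IsOpen N ∧ U ⊆ N ∧
    ∀ x ∈ S, DecreasesNear X f N V δ x) ⟨1, one_pos, Set.univ, isOpen_univ, by simp, by simp⟩
    ?_ ?_ ?_
  · rintro s t hst ⟨δ, hδ, N, hNo, hUN, ht⟩
    exact ⟨δ, hδ, N, hNo, hUN, fun x hx => ht x (hst hx)⟩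
  · rintro s t ⟨δ, hδ, N, hNo, hUN, hs⟩ ⟨δ', hδ', N', hNo', hUN', ht⟩
    refine ⟨min δ δ', lt_min hδ hδ', N ∩ N', hNo.inter hNo', Set.subset_inter hUN hUN', ?_⟩
    rintro x (hx | hx)
    · exact (hs x hx).anti Set.inter_subset_left (min_le_left _ _)
    · exact (ht x hx).anti Set.inter_subset_right (min_le_right _ _)
  · intro x hx
    obtain ⟨δ, hδ, N, hNo, hUN, hd⟩ := hV.exists_decreasesNear hf hU (hSX hx) (hVS x hx)
    exact ⟨{y | DecreasesNear X f N V δ y}, mem_nhdsWithin_of_mem_nhds hd.eventually,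
      δ, hδ, N, hNo, hUN, fun y hy => hy⟩

/-- Along a trajectory that stays where `V` decreases at rate `δ`, the value of `V` drops by at
least `δ` times the elapsed time. -/
lemma DecreasesNear.comp_le {X : Set E} {f : E → 𝒰 → E} {N : Set 𝒰} {V : E → ℝ} {δ : ℝ}
    {ξ : ℝ → E} {ω : ℝ → 𝒰} (hξlip : LocallyLipschitz ξ) {a b : ℝ} (hab : a ≤ b)
    (hξX : ∀ t ∈ Set.Icc a b, ξ t ∈ X)
    (hode : ∀ᵐ t : ℝ, t ∈ Set.Icc a b → HasDerivAt ξ (f (ξ t) (ω t)) t)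
    (hω : ∀ t ∈ Set.Icc a b, ω t ∈ N)
    (hdec : ∀ t ∈ Set.Icc a b, DecreasesNear X f N V δ (ξ t)) :
    V (ξ b) ≤ V (ξ a) - δ * (b - a) := by
  have hloc : LocallyLipschitzOn (Set.Icc a b) (V ∘ ξ) := by
    intro t ht
    obtain ⟨W, Vt, hWo, hxW, hVt, heq, -⟩ := hdec t ht
    obtain ⟨K, s, hs, hK⟩ := (hVt.contDiffAt (hWo.mem_nhds hxW)).exists_lipschitzOnWith
    obtain ⟨L, r, hr, hL⟩ := hξlip t
    have hpre : ξ ⁻¹' (s ∩ W) ∈ 𝓝 t :=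
      hξlip.continuous.continuousAt (inter_mem hs (hWo.mem_nhds hxW))
    refine ⟨K * L, (r ∩ ξ ⁻¹' (s ∩ W)) ∩ Set.Icc a b, ?_, ?_⟩
    · exact inter_mem (mem_nhdsWithin_of_mem_nhds (inter_mem hr hpre)) self_mem_nhdsWithin
    · have hcomp : LipschitzOnWith (K * L) (Vt ∘ ξ) ((r ∩ ξ ⁻¹' (s ∩ W)) ∩ Set.Icc a b) :=
        hK.comp (hL.mono fun p hp => hp.1.1) fun p hp => hp.1.2.1
      intro p hp q hq
      have h1 := heq (ξ p) ⟨hp.1.2.2, hξX p hp.2⟩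
      have h2 := heq (ξ q) ⟨hq.1.2.2, hξX q hq.2⟩
      simpa [h1, h2] using hcomp hp hq
  obtain ⟨K, hK⟩ := hloc.exists_lipschitzOnWith_of_compact isCompact_Icc
  rw [← Set.uIcc_of_le hab] at hK
  have hac := hK.absolutelyContinuousOnInterval
  have hderiv : ∀ᵐ t : ℝ, t ∈ Set.Ioo a b → deriv (V ∘ ξ) t ≤ -δ := by
    filter_upwards [hode] with t ht htab
    have htI := Set.Ioo_subset_Icc_self htab
    obtain ⟨W, Vt, hWo, hxW, hVt, heq, hlt⟩ := hdec t htI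
    have hd : HasDerivAt (Vt ∘ ξ) (fderiv ℝ Vt (ξ t) (f (ξ t) (ω t))) t :=
      ((hVt.contDiffAt (hWo.mem_nhds hxW)).differentiableAt
        one_ne_zero).hasFDerivAt.comp_hasDerivAt t (ht htI)
    have hev : V ∘ ξ =ᶠ[𝓝 t] Vt ∘ ξ := by
      filter_upwards [hξlip.continuous.continuousAt (hWo.mem_nhds hxW),
        Ioo_mem_nhds htab.1 htab.2] with s hs hsab
      exact (heq (ξ s) ⟨hs, hξX s (Set.Ioo_subset_Icc_self hsab)⟩).symm
    rw [(hd.congr_of_eventuallyEq hev).deriv]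
    exact (hlt _ hxW _ (hω t htI)).le
  have hint : ∫ t in a..b, deriv (V ∘ ξ) t ≤ ∫ _ in a..b, -δ := by
    refine intervalIntegral.integral_mono_ae_restrict hab hac.intervalIntegrable_deriv
      intervalIntegrable_const ?_
    rw [Filter.EventuallyLE, ← restrict_Ioo_eq_restrict_Icc,
      ae_restrict_iff' measurableSet_Ioo]
    exact hderiv
  rw [hac.integral_deriv_eq_sub, intervalIntegral.integral_const, smul_eq_mul] at hint
  simp only [Function.comp_apply] at hint
  linarith

/-- A continuous function starting at most `a`, and not increasing over any interval on which it
is at least `a`, ends at most `a`. -/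
lemma ContinuousOn.le_of_barrier {v : ℝ → ℝ} {t₀ t₁ a : ℝ} (ht : t₀ ≤ t₁)
    (hv : ContinuousOn v (Set.Icc t₀ t₁)) (h₀ : v t₀ ≤ a)
    (hdec : ∀ s ∈ Set.Icc t₀ t₁, (∀ r ∈ Set.Icc s t₁, a ≤ v r) → v t₁ ≤ v s) : v t₁ ≤ a := by
  have hcl : IsCompact (Set.Icc t₀ t₁ ∩ v ⁻¹' Set.Iic a) :=
    isCompact_Icc.of_isClosed_subset
      (hv.preimage_isClosed_of_isClosed isClosed_Icc isClosed_Iic) Set.inter_subset_left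
  obtain ⟨s, ⟨hsI, hsa⟩, hmax⟩ := hcl.exists_isGreatest ⟨t₀, ⟨le_rfl, ht⟩, h₀⟩
  have habove : ∀ r ∈ Set.Ioc s t₁, a ≤ v r := by
    intro r hr
    by_contra! hlt
    exact absurd (hmax ⟨⟨hsI.1.trans hr.1.le, hr.2⟩, hlt.le⟩) (not_le.2 hr.1)
  rcases hsI.2.eq_or_lt with rfl | hst
  · exact hsa
  have hs : a ≤ v s := by
    have hcont : ContinuousOn v (Set.Icc s t₁) := hv.mono (Set.Icc_subset_Icc_left hsI.1)
    have htend : Tendsto v (𝓝[Set.Ioc s t₁] s) (𝓝 (v s)) :=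
      (hcont s ⟨le_rfl, hst.le⟩).mono Set.Ioc_subset_Icc_self
    have : (𝓝[Set.Ioc s t₁] s).NeBot := by
      rw [nhdsWithin_Ioc_eq_nhdsGT hst]; infer_instance
    exact ge_of_tendsto htend (eventually_nhdsWithin_of_forall habove)
  refine (hdec s hsI fun r hr => ?_).trans hsa
  rcases hr.1.eq_or_lt with rfl | hlt
  exacts [hs, habove r ⟨hlt, hr.2⟩]

variable [PseudoMetricSpace 𝒰] {X₀ X : Set E} {f : E → 𝒰 → E} {ξ : ℝ → E} {ω : ℝ → 𝒰}

/-- A decrease function for all the values of the input does not exceed its initial value. -/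
lemma UDecrease.comp_le_initial
    (hf : ContinuousOn (fun p : E × 𝒰 => f p.1 p.2) (X₀ ×ˢ (Set.univ : Set 𝒰)))
    {K : Set 𝒰} (hK : IsCompact K) {V : E → ℝ} (hV : UDecrease X₀ X f K V)
    (hωK : ∀ t, 0 ≤ t → ω t ∈ K) (hξlip : LocallyLipschitz ξ) (hξX : ∀ t, 0 ≤ t → ξ t ∈ X)
    (hode : ∀ᵐ t : ℝ, 0 ≤ t → HasDerivAt ξ (f (ξ t) (ω t)) t) {t : ℝ} (ht : 0 ≤ t) :
    V (ξ t) ≤ V (ξ 0) := by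
  refine le_of_forall_gt_imp_ge_of_dense fun a ha => ?_
  have hapos : 0 < a := (hV.1 _ (hξX 0 le_rfl)).trans_lt ha
  have hvc : ContinuousOn (fun s => V (ξ s)) (Set.Icc 0 t) :=
    hV.2.1.comp hξlip.continuous.continuousOn fun s hs => hξX s hs.1
  have hS : IsCompact (ξ '' (Set.Icc 0 t ∩ (fun s => V (ξ s)) ⁻¹' Set.Ici a)) :=
    (isCompact_Icc.of_isClosed_subset (hvc.preimage_isClosed_of_isClosed isClosed_Icc isClosed_Ici)
      Set.inter_subset_left).image hξlip.continuous
  obtain ⟨δ, hδ, N, -, hKN, hdec⟩ := hV.exists_uniform_decreasesNear hf hK hS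
    (by rintro _ ⟨s, hs, rfl⟩; exact hξX s hs.1.1)
    (by rintro _ ⟨s, hs, rfl⟩; exact (hapos.trans_le hs.2).ne')
  refine hvc.le_of_barrier ht ha.le fun s hs hr => ?_
  have := DecreasesNear.comp_le hξlip hs.2 (fun r hr' => hξX r (hs.1.trans hr'.1))
    (by filter_upwards [hode] with r h1 hr' using h1 (hs.1.trans hr'.1))
    (fun r hr' => hKN (hωK r (hs.1.trans hr'.1)))
    (fun r hr' => hdec _ ⟨r, ⟨⟨hs.1.trans hr'.1, hr'.2⟩, hr r hr'⟩, rfl⟩)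
  nlinarith [mul_nonneg hδ.le (sub_nonneg.2 hs.2)]

/-- Along a trajectory in a compact set whose input converges into `U`, a `U`-decrease function
tends to zero. -/
lemma UDecrease.tendsto_comp_zero
    (hf : ContinuousOn (fun p : E × 𝒰 => f p.1 p.2) (X₀ ×ˢ (Set.univ : Set 𝒰)))
    {U : Set 𝒰} (hU : IsCompact U) {V : E → ℝ} (hV : UDecrease X₀ X f U V)
    {u : 𝒰} (hu : u ∈ U) (hlim : Tendsto ω atTop (𝓝 u))
    (hξlip : LocallyLipschitz ξ)
    (hode : ∀ᵐ t : ℝ, 0 ≤ t → HasDerivAt ξ (f (ξ t) (ω t)) t)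
    {C : Set E} (hC : IsCompact C) (hCX : C ⊆ X) (hξC : ∀ t, 0 ≤ t → ξ t ∈ C) :
    Tendsto (fun t => V (ξ t)) atTop (𝓝 0) := by
  refine tendsto_order.2 ⟨fun a ha => ?_, fun a' ha' => ?_⟩
  · filter_upwards [eventually_ge_atTop 0] with t ht
    exact ha.trans_le (hV.1 _ (hCX (hξC t ht)))
  obtain ⟨a, ha, haa'⟩ := exists_between ha'
  have hS : IsCompact (C ∩ V ⁻¹' Set.Ici a) :=
    hC.of_isClosed_subset ((hV.2.1.mono hCX).preimage_isClosed_of_isClosed hC.isClosed isClosed_Ici)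
      Set.inter_subset_left
  obtain ⟨δ, hδ, N, hNo, hUN, hdec⟩ := hV.exists_uniform_decreasesNear hf hU hS
    (fun x hx => hCX hx.1) (fun x hx => (ha.trans_le hx.2).ne')
  obtain ⟨T, hT⟩ := eventually_atTop.1
    ((hlim.eventually (hNo.mem_nhds (hUN hu))).and (eventually_ge_atTop 0))
  have hT0 : ∀ t, T ≤ t → 0 ≤ t := fun t ht => (hT t ht).2
  have hdrop : ∀ s t, T ≤ s → s ≤ t → (∀ r ∈ Set.Icc s t, a ≤ V (ξ r)) →
      V (ξ t) ≤ V (ξ s) - δ * (t - s) := fun s t hs hst hr =>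
    DecreasesNear.comp_le hξlip hst (fun r hr' => hCX (hξC r (hT0 r (hs.trans hr'.1))))
      (by filter_upwards [hode] with r h1 hr' using h1 (hT0 r (hs.trans hr'.1)))
      (fun r hr' => (hT r (hs.trans hr'.1)).1)
      (fun r hr' => hdec _ ⟨hξC r (hT0 r (hs.trans hr'.1)), hr r hr'⟩)
  obtain ⟨t₀, ht₀, hVt₀⟩ : ∃ t₀, T ≤ t₀ ∧ V (ξ t₀) ≤ a := by
    by_contra! hcon
    have hV0 : 0 ≤ V (ξ T) := hV.1 _ (hCX (hξC T (hT0 T le_rfl)))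
    have hle : T ≤ T + V (ξ T) / δ := le_add_of_nonneg_right (by positivity)
    have h1 := hdrop T (T + V (ξ T) / δ) le_rfl hle fun r hr => (hcon r hr.1).le
    have h2 := hcon _ hle
    have h3 : δ * (T + V (ξ T) / δ - T) = V (ξ T) := by field_simp; ring
    linarith
  filter_upwards [eventually_ge_atTop t₀] with t ht
  refine lt_of_le_of_lt ?_ haa'
  have hvc : ContinuousOn (fun s => V (ξ s)) (Set.Icc t₀ t) :=
    hV.2.1.comp hξlip.continuous.continuousOn fun s hs =>
      hCX (hξC s (hT0 s (ht₀.trans hs.1)))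
  refine hvc.le_of_barrier ht hVt₀ fun s hs hr => ?_
  have := hdrop s t (ht₀.trans hs.1) hs.2 hr
  nlinarith [mul_nonneg hδ.le (sub_nonneg.2 hs.2)]

/-- Every ultrafilter at infinity makes a trajectory converge to a zero of a `U`-decrease function,
as soon as the input is precompact and converges into `U`. -/
lemma UDecrease.exists_tendsto_ZV
    (hf : ContinuousOn (fun p : E × 𝒰 => f p.1 p.2) (X₀ ×ˢ (Set.univ : Set 𝒰)))
    {K U : Set 𝒰} (hK : IsCompact K) (hU : IsCompact U) {VK V : E → ℝ}
    (hVK : UDecrease X₀ X f K VK) (hV : UDecrease X₀ X f U V)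
    (hωK : ∀ t, 0 ≤ t → ω t ∈ K) {u : 𝒰} (hu : u ∈ U) (hlim : Tendsto ω atTop (𝓝 u))
    (hξlip : LocallyLipschitz ξ) (hξX : ∀ t, 0 ≤ t → ξ t ∈ X)
    (hode : ∀ᵐ t : ℝ, 0 ≤ t → HasDerivAt ξ (f (ξ t) (ω t)) t)
    {F : Ultrafilter ℝ} (hF : ↑F ≤ (atTop : Filter ℝ)) :
    ∃ x ∈ ZV X V, Tendsto ξ F (𝓝[X] x) := by
  set C : Set E := {x ∈ X | 0 ≤ VK x ∧ VK x ≤ VK (ξ 0)}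
  have hC : IsCompact C := hVK.2.2.1 0 _ le_rfl (hVK.1 _ (hξX 0 le_rfl))
  have hξC : ∀ t, 0 ≤ t → ξ t ∈ C := fun t ht =>
    ⟨hξX t ht, hVK.1 _ (hξX t ht), hVK.comp_le_initial hf hK hωK hξlip hξX hode ht⟩
  have hCX : C ⊆ X := fun x hx => hx.1
  have hzero := hV.tendsto_comp_zero hf hU hu hlim hξlip hode hC hCX hξC
  have hFC : ∀ᶠ t in (F : Filter ℝ), ξ t ∈ C := hF ((eventually_ge_atTop 0).mono hξC)
  obtain ⟨x, hx, hFx⟩ := hC.ultrafilter_le_nhds (F.map ξ) (le_principal_iff.2 hFC)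
  have hξx : Tendsto ξ F (𝓝[X] x) :=
    tendsto_nhdsWithin_iff.2 ⟨hFx, hFC.mono fun _ ht => hCX ht⟩
  exact ⟨x, ⟨hCX hx, tendsto_nhds_unique ((hV.2.1 x (hCX hx)).tendsto.comp hξx)
    (hzero.mono_left hF)⟩, hξx⟩

end Decrease

/-- If every ultrafilter at infinity makes `ξ` converge to a point of a set on which `h` is
constant, then `h ∘ ξ` converges. -/
lemma exists_tendsto_of_ultrafilter {E 𝒴 : Type*} [TopologicalSpace E] [TopologicalSpace 𝒴]
    {X Z : Set E} (hZX : Z ⊆ X) {h : E → 𝒴} (hh : ContinuousOn h X)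
    (hsub : (h '' Z).Subsingleton) {ξ : ℝ → E}
    (hξ : ∀ F : Ultrafilter ℝ, ↑F ≤ (atTop : Filter ℝ) → ∃ x ∈ Z, Tendsto ξ F (𝓝[X] x)) :
    ∃ y, Tendsto (fun t => h (ξ t)) atTop (𝓝 y) := by
  obtain ⟨x₀, hx₀, -⟩ := hξ (Ultrafilter.of atTop) (Ultrafilter.of_le _)
  refine ⟨h x₀, tendsto_iff_ultrafilter _ _ _ |>.2 fun F hF => ?_⟩
  obtain ⟨x, hx, hFx⟩ := hξ F hF
  rw [hsub (Set.mem_image_of_mem h hx₀) (Set.mem_image_of_mem h hx)]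
  exact (hh x (hZX hx)).tendsto.comp hFx

/-- Theorem 1, incremental limit gain part: the behavior of
`ẋ = f(x,u)`, `y = h(x)` has incremental limit gain γ. -/
theorem stmt17 {n : ℕ} {𝒰 𝒴 : Type*} [MetricSpace 𝒰] [CompleteSpace 𝒰]
    [MeasurableSpace 𝒰] [BorelSpace 𝒰] [MetricSpace 𝒴] [CompleteSpace 𝒴]
    (X₀ X : Set (Fin n → ℝ)) (hX₀ : IsOpen X₀) (hXsub : X ⊆ X₀)
    (f : (Fin n → ℝ) → 𝒰 → (Fin n → ℝ))
    (hf : ContinuousOn (fun p : (Fin n → ℝ) × 𝒰 => f p.1 p.2) (X₀ ×ˢ (Set.univ : Set 𝒰)))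
    (h : (Fin n → ℝ) → 𝒴) (hh : ContinuousOn h X)
    (γ : ℝ≥0 → ℝ≥0) (hγ : KInfty γ)
    (VU : Set 𝒰 → ((Fin n → ℝ) → ℝ))
    (hVU : ∀ U : Set 𝒰, IsCompact U → UDecrease X₀ X f U (VU U) ∧
      EMetric.diam (h '' ZV X (VU U)) ≤ extK γ (EMetric.diam U))
    (ω₁ ω₂ : ℝ → 𝒰) (hmeas₁ : Measurable ω₁) (hmeas₂ : Measurable ω₂)
    (hpre₁ : Precomp ω₁) (hpre₂ : Precomp ω₂) (u₁ u₂ : 𝒰)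
    (hlim₁ : Filter.Tendsto ω₁ Filter.atTop (nhds u₁))
    (hlim₂ : Filter.Tendsto ω₂ Filter.atTop (nhds u₂))
    (ξ₁ ξ₂ : ℝ → (Fin n → ℝ)) (hξlip₁ : LocallyLipschitz ξ₁) (hξlip₂ : LocallyLipschitz ξ₂)
    (hξX₁ : ∀ t : ℝ, 0 ≤ t → ξ₁ t ∈ X) (hξX₂ : ∀ t : ℝ, 0 ≤ t → ξ₂ t ∈ X)
    (hode₁ : ∀ᵐ t : ℝ ∂volume, 0 ≤ t → HasDerivAt ξ₁ (f (ξ₁ t) (ω₁ t)) t)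
    (hode₂ : ∀ᵐ t : ℝ ∂volume, 0 ≤ t → HasDerivAt ξ₂ (f (ξ₂ t) (ω₂ t)) t) :
    ∃ y₁ y₂ : 𝒴,
      Filter.Tendsto (fun t => h (ξ₁ t)) Filter.atTop (nhds y₁) ∧
      Filter.Tendsto (fun t => h (ξ₂ t)) Filter.atTop (nhds y₂) ∧
      nndist y₁ y₂ ≤ γ (nndist u₁ u₂) := by
  have hdiam : ∀ U : Set 𝒰, IsCompact U →
      Metric.ediam (h '' ZV X (VU U)) ≤ extK γ (Metric.ediam U) := fun U hU => (hVU U hU).2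
  have key : ∀ (ω : ℝ → 𝒰) (ξ : ℝ → (Fin n → ℝ)) (u : 𝒰), Precomp ω →
      Tendsto ω atTop (𝓝 u) → LocallyLipschitz ξ → (∀ t : ℝ, 0 ≤ t → ξ t ∈ X) →
      (∀ᵐ t : ℝ ∂volume, 0 ≤ t → HasDerivAt ξ (f (ξ t) (ω t)) t) →
      ∀ U : Set 𝒰, IsCompact U → u ∈ U → ∀ F : Ultrafilter ℝ, ↑F ≤ (atTop : Filter ℝ) →
        ∃ x ∈ ZV X (VU U), Tendsto ξ F (𝓝[X] x) := by
    rintro ω ξ u ⟨K, hK, hωK⟩ hlim hlip hξX hode U hU hu F hF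
    exact UDecrease.exists_tendsto_ZV hf hK hU (hVU K hK).1 (hVU U hU).1 hωK hu hlim hlip hξX
      hode hF
  have hsub : ∀ u : 𝒰, (h '' ZV X (VU {u})).Subsingleton := fun u => by
    have := hdiam {u} isCompact_singleton
    rw [Metric.ediam_singleton] at this
    exact Metric.ediam_eq_zero_iff.1 (by simpa [extK, hγ.2.2.1] using this)
  obtain ⟨y₁, hy₁⟩ := exists_tendsto_of_ultrafilter (fun x hx => hx.1) hh (hsub u₁)
    (key ω₁ ξ₁ u₁ hpre₁ hlim₁ hξlip₁ hξX₁ hode₁ {u₁} isCompact_singleton rfl)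
  obtain ⟨y₂, hy₂⟩ := exists_tendsto_of_ultrafilter (fun x hx => hx.1) hh (hsub u₂)
    (key ω₂ ξ₂ u₂ hpre₂ hlim₂ hξlip₂ hξX₂ hode₂ {u₂} isCompact_singleton rfl)
  refine ⟨y₁, y₂, hy₁, hy₂, ?_⟩
  have hU : IsCompact ({u₁, u₂} : Set 𝒰) := (Set.toFinite _).isCompact
  have hF := Ultrafilter.of_le (atTop : Filter ℝ)
  obtain ⟨x₁, hx₁, hFx₁⟩ := key ω₁ ξ₁ u₁ hpre₁ hlim₁ hξlip₁ hξX₁ hode₁ _ hU (by simp) _ hF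
  obtain ⟨x₂, hx₂, hFx₂⟩ := key ω₂ ξ₂ u₂ hpre₂ hlim₂ hξlip₂ hξX₂ hode₂ _ hU (by simp) _ hF
  obtain rfl : h x₁ = y₁ :=
    tendsto_nhds_unique ((hh x₁ hx₁.1).tendsto.comp hFx₁) (hy₁.mono_left hF)
  obtain rfl : h x₂ = y₂ :=
    tendsto_nhds_unique ((hh x₂ hx₂.1).tendsto.comp hFx₂) (hy₂.mono_left hF)
  have hle := (Metric.edist_le_ediam_of_mem (Set.mem_image_of_mem h hx₁)
    (Set.mem_image_of_mem h hx₂)).trans (hdiam _ hU)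
  rw [Metric.ediam_pair, extK, if_neg (edist_ne_top _ _), edist_nndist, edist_nndist,
    ENNReal.toNNReal_coe, ENNReal.coe_le_coe] at hle
  exact hle
end
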